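/- Assume (H1): the completely positive map L admits a unique invariant state ρ_∞. Fix l ∈ ℝ^d and set m = Σ_{i=1}^{2d} Tr(A_i ρ_∞ A_i^*) e_i. If L and L' are two k×k matrices both satisfying X - L^*(X) = Σ_{i=1}^{2d} (e_i·l) A_i^* A_i - (m·l) I, then L - L' is a complex multiple of the identity matrix. -/

import Mathlib

open MeasureTheory Filter Matrix Finset
open scoped ComplexOrder

noncomputable section

/-- The direction vectors `e_1, …, e_{2d}` in `ℤ^d`, with `e_{d+j} = -e_j`. -/
def dir (d : ℕ) (i : Fin (2 * d)) : Fin d → ℤ :=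
  fun j => if (i : ℕ) < d then (if (j : ℕ) = (i : ℕ) then 1 else 0)
           else (if (j : ℕ) = (i : ℕ) - d then -1 else 0)

/-- The direction vectors viewed in `ℝ^d`. -/
def dirR (d : ℕ) (i : Fin (2 * d)) : Fin d → ℝ := fun j => (dir d i j : ℝ)

instance {k : ℕ} : MeasurableSpace (Matrix (Fin k) (Fin k) ℂ) := MeasurableSpace.pi

/-- A density matrix: positive semidefinite with trace one. -/
def IsDensity {k : ℕ} (ρ : Matrix (Fin k) (Fin k) ℂ) : Prop := ρ.PosSemidef ∧ ρ.trace = 1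

/-- The quantum trajectory process of the open quantum random walk. -/
structure IsQTraj {k d : ℕ} {Ω : Type} {mΩ : MeasurableSpace Ω}
    (A : Fin (2 * d) → Matrix (Fin k) (Fin k) ℂ)
    (μ : Measure Ω) (ℱ : Filtration ℕ mΩ)
    (ρ : ℕ → Ω → Matrix (Fin k) (Fin k) ℂ)
    (X : ℕ → Ω → Fin d → ℤ) : Prop where
  density : ∀ n, ∀ᵐ ω ∂μ, IsDensity (ρ n ω)
  adapted_ρ : ∀ n, Measurable[ℱ n] (ρ n)
  adapted_X : ∀ n, Measurable[ℱ n] (X n)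
  prob : ∀ (n : ℕ) (j : Fin (2 * d)),
    μ[(fun ω => if X (n + 1) ω = X n ω + dir d j then (1 : ℝ) else 0) | ℱ n]
      =ᵐ[μ] fun ω => ((A j * ρ n ω * (A j)ᴴ).trace).re
  update : ∀ (n : ℕ) (j : Fin (2 * d)), ∀ᵐ ω ∂μ,
    X (n + 1) ω = X n ω + dir d j →
      ρ (n + 1) ω = ((A j * ρ n ω * (A j)ᴴ).trace)⁻¹ • (A j * ρ n ω * (A j)ᴴ)

/-- The drift vector `m = Σ_{i=1}^{2d} Tr(A_i ρ_∞ A_i^*) e_i ∈ ℝ^d`. -/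
def mvec {k d : ℕ} (A : Fin (2 * d) → Matrix (Fin k) (Fin k) ℂ)
    (ρinf : Matrix (Fin k) (Fin k) ℂ) : Fin d → ℝ :=
  fun j => ∑ i, ((A i * ρinf * (A i)ᴴ).trace).re * dirR d i j

/-!
The difference `Y` of two solutions is fixed by the adjoint map `L^*`, i.e. the functional
`σ ↦ Tr (Y σ)` vanishes on the range of `L - 1`. If `σ` is a Hermitian fixed point of `L`, then
`σ = L σ⁺ - L σ⁻` is a difference of positive matrices, and since `L` preserves the trace it has the
minimal trace of the Jordan decomposition; hence `L σ⁺ = σ⁺` and `L σ⁻ = σ⁻`. Uniqueness of the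
invariant state thus makes the fixed space of `L` at most one-dimensional, so by rank-nullity the
range of `L - 1` consists of all matrices of trace zero. A functional vanishing on these is a
multiple of the trace, which means that `Y` is scalar.
-/

open scoped MatrixOrder ComplexStarModule

section Trace

variable {𝕜 n : Type*} [RCLike 𝕜] [Fintype n]

theorem trace_mul_eq_trace_sqrt_mul_sqrt_mul_conjTranspose [DecidableEq n]
    {A B : Matrix n n 𝕜} (hA : 0 ≤ A) (hB : 0 ≤ B) :
    (A * B).trace = (CFC.sqrt A * CFC.sqrt B * (CFC.sqrt A * CFC.sqrt B)ᴴ).trace := by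
  have hsqrtA : (CFC.sqrt A)ᴴ = CFC.sqrt A := (CFC.sqrt_nonneg A).isSelfAdjoint
  have hsqrtB : (CFC.sqrt B)ᴴ = CFC.sqrt B := (CFC.sqrt_nonneg B).isSelfAdjoint
  rw [conjTranspose_mul, hsqrtA, hsqrtB, ← Matrix.mul_assoc, Matrix.mul_assoc (CFC.sqrt A),
    CFC.sqrt_mul_sqrt_self B, trace_mul_comm (CFC.sqrt A * B), ← Matrix.mul_assoc,
    CFC.sqrt_mul_sqrt_self A]

theorem trace_mul_nonneg_of_nonneg {A B : Matrix n n 𝕜} (hA : 0 ≤ A) (hB : 0 ≤ B) :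
    0 ≤ (A * B).trace := by
  classical
  rw [trace_mul_eq_trace_sqrt_mul_sqrt_mul_conjTranspose hA hB]
  exact (posSemidef_self_mul_conjTranspose _).trace_nonneg

theorem mul_eq_zero_of_trace_mul_eq_zero {A B : Matrix n n 𝕜} (hA : 0 ≤ A) (hB : 0 ≤ B)
    (h : (A * B).trace = 0) : A * B = 0 := by
  classical
  rw [trace_mul_eq_trace_sqrt_mul_sqrt_mul_conjTranspose hA hB,
    trace_mul_conjTranspose_self_eq_zero_iff] at h
  calc A * B = CFC.sqrt A * (CFC.sqrt A * CFC.sqrt B) * CFC.sqrt B := by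
        rw [← Matrix.mul_assoc, CFC.sqrt_mul_sqrt_self A, Matrix.mul_assoc,
          CFC.sqrt_mul_sqrt_self B]
    _ = 0 := by rw [h, Matrix.mul_zero, Matrix.zero_mul]

theorem exists_isStarProjection_mul_eq_posPart [DecidableEq n] {σ : Matrix n n 𝕜}
    (hσ : IsSelfAdjoint σ) : ∃ P : Matrix n n 𝕜, IsStarProjection P ∧ P * σ = σ⁺ := by
  have hcont (f : ℝ → ℝ) : ContinuousOn f (spectrum ℝ σ) := σ.finite_real_spectrum.continuousOn f
  refine ⟨cfc ((Set.Ioi (0 : ℝ)).indicator 1) σ, ⟨?_, cfc_predicate _ σ⟩, ?_⟩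
  · rw [IsIdempotentElem, ← cfc_mul _ _ σ (hcont _) (hcont _)]
    congr 1
    ext x
    by_cases hx : 0 < x <;> simp [hx]
  · rw [CFC.posPart_def, cfcₙ_eq_cfc]
    nth_rw 2 [← cfc_id ℝ σ]
    rw [← cfc_mul _ _ σ (hcont _) (hcont _)]
    congr 1
    ext x
    by_cases hx : 0 < x
    · simp [hx, hx.le]
    · simp [hx, not_lt.mp hx]

theorem eq_posPart_of_trace_eq [DecidableEq n] {σ S N : Matrix n n 𝕜} (hS : 0 ≤ S)
    (hN : 0 ≤ N) (hσ : S - N = σ) (htrace : S.trace = σ⁺.trace) : S = σ⁺ := by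
  obtain ⟨P, hP, hPσ⟩ := exists_isStarProjection_mul_eq_posPart
    (hσ ▸ hS.isSelfAdjoint.sub hN.isSelfAdjoint)
  have hPSN : P * S - P * N = σ⁺ := by rw [← Matrix.mul_sub, hσ, hPσ]
  have hsum : (P * N).trace + ((1 - P) * S).trace = 0 := by
    rw [Matrix.sub_mul, Matrix.one_mul, trace_sub, htrace, ← hPSN, trace_sub]
    ring
  obtain ⟨hPN, hQS⟩ := (add_eq_zero_iff_of_nonneg
    (trace_mul_nonneg_of_nonneg hP.nonneg hN)
    (trace_mul_nonneg_of_nonneg hP.one_sub.nonneg hS)).mp hsum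
  have hPN : P * N = 0 := mul_eq_zero_of_trace_mul_eq_zero hP.nonneg hN hPN
  have hQS : (1 - P) * S = 0 := mul_eq_zero_of_trace_mul_eq_zero hP.one_sub.nonneg hS hQS
  rw [Matrix.sub_mul, Matrix.one_mul, sub_eq_zero] at hQS
  rw [hQS, ← hPSN, hPN, sub_zero]

end Trace

theorem exists_eq_smul_one_of_trace_mul_eq_zero {K n : Type*} [Field K] [Fintype n] [DecidableEq n]
    {Y : Matrix n n K} (hY : ∀ Z : Matrix n n K, Z.trace = 0 → (Y * Z).trace = 0) :
    ∃ c : K, Y = c • (1 : Matrix n n K) := by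
  let traceMul : Matrix n n K →ₗ[K] K := traceLinearMap n K K ∘ₗ LinearMap.mulLeft K Y
  have hmem : traceMul ∈ Submodule.span K (Set.range fun _ : Unit => traceLinearMap n K K) :=
    mem_span_of_iInf_ker_le_ker fun Z hZ => hY Z (by simpa using hZ)
  rw [Set.range_const, Submodule.mem_span_singleton] at hmem
  obtain ⟨c, hc⟩ := hmem
  refine ⟨c, ext_iff_trace_mul_right.mpr fun Z => ?_⟩
  simpa [traceMul] using (LinearMap.congr_fun hc Z).symm

section FixedPoints

variable {𝕜 n : Type*} [RCLike 𝕜] [Fintype n]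

/-- The density matrices (positive semidefinite, trace one) fixed by `Φ`, over an arbitrary finite
index type. Hypothesis (H1) says that this set is a singleton. -/
def invariantStates (Φ : Matrix n n 𝕜 →ₚ[𝕜] Matrix n n 𝕜) : Set (Matrix n n 𝕜) :=
  {σ | σ.PosSemidef ∧ σ.trace = 1 ∧ Φ σ = σ}

theorem mem_span_of_nonneg_of_map_eq_self {Φ : Matrix n n 𝕜 →ₚ[𝕜] Matrix n n 𝕜} {ρ : Matrix n n 𝕜}
    (hρ : invariantStates Φ ⊆ {ρ}) {σ : Matrix n n 𝕜} (hσ : 0 ≤ σ) (hfix : Φ σ = σ) :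
    σ ∈ Submodule.span 𝕜 {ρ} := by
  by_cases htrace : σ.trace = 0
  · rw [hσ.posSemidef.trace_eq_zero_iff.mp htrace]
    exact Submodule.zero_mem _
  · have hstate : σ.trace⁻¹ • σ ∈ invariantStates Φ :=
      ⟨hσ.posSemidef.smul (inv_nonneg.mpr hσ.posSemidef.trace_nonneg), by simp [htrace],
        by rw [map_smul, hfix]⟩
    refine Submodule.mem_span_singleton.mpr ⟨σ.trace, ?_⟩
    rw [← hρ hstate, smul_inv_smul₀ htrace]

theorem map_posPart_of_map_eq_self [DecidableEq n]
    {Φ : Matrix n n 𝕜 →ₚ[𝕜] Matrix n n 𝕜} (hΦ : ∀ σ, (Φ σ).trace = σ.trace)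
    {σ : Matrix n n 𝕜} (hσ : IsSelfAdjoint σ) (hfix : Φ σ = σ) : Φ σ⁺ = σ⁺ :=
  eq_posPart_of_trace_eq (map_nonneg Φ (CFC.posPart_nonneg σ)) (map_nonneg Φ (CFC.negPart_nonneg σ))
    (by rw [← map_sub, CFC.posPart_sub_negPart σ, hfix]) (hΦ _)

theorem mem_span_of_isSelfAdjoint_of_map_eq_self {Φ : Matrix n n 𝕜 →ₚ[𝕜] Matrix n n 𝕜}
    (hΦ : ∀ σ, (Φ σ).trace = σ.trace) {ρ : Matrix n n 𝕜} (hρ : invariantStates Φ ⊆ {ρ})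
    {σ : Matrix n n 𝕜} (hσ : IsSelfAdjoint σ) (hfix : Φ σ = σ) :
    σ ∈ Submodule.span 𝕜 {ρ} := by
  classical
  have hpos : Φ σ⁺ = σ⁺ := map_posPart_of_map_eq_self hΦ hσ hfix
  have hneg : Φ σ⁻ = σ⁻ := by
    have := map_posPart_of_map_eq_self hΦ hσ.neg (by rw [map_neg, hfix])
    rwa [CFC.posPart_neg] at this
  rw [← CFC.posPart_sub_negPart σ]
  exact Submodule.sub_mem _
    (mem_span_of_nonneg_of_map_eq_self hρ (CFC.posPart_nonneg σ) hpos)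
    (mem_span_of_nonneg_of_map_eq_self hρ (CFC.negPart_nonneg σ) hneg)

end FixedPoints

section Complex

variable {n : Type*} [Fintype n] {Φ : Matrix n n ℂ →ₚ[ℂ] Matrix n n ℂ}

theorem mem_span_of_map_eq_self (hΦ : ∀ σ, (Φ σ).trace = σ.trace) {ρ : Matrix n n ℂ}
    (hρ : invariantStates Φ ⊆ {ρ}) {σ : Matrix n n ℂ} (hfix : Φ σ = σ) :
    σ ∈ Submodule.span ℂ {ρ} := by
  classical
  have hre : Φ (ℜ σ) = ℜ σ := by rw [map_realPart, hfix]
  have him : Φ (ℑ σ) = ℑ σ := by rw [map_imaginaryPart, hfix]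
  rw [← realPart_add_I_smul_imaginaryPart σ]
  exact Submodule.add_mem _
    (mem_span_of_isSelfAdjoint_of_map_eq_self hΦ hρ (ℜ σ).2 hre)
    (Submodule.smul_mem _ _ (mem_span_of_isSelfAdjoint_of_map_eq_self hΦ hρ (ℑ σ).2 him))

theorem finrank_ker_sub_id_le_one (hΦ : ∀ σ, (Φ σ).trace = σ.trace)
    (hunique : (invariantStates Φ).Subsingleton) :
    Module.finrank ℂ (LinearMap.ker (Φ.toLinearMap - LinearMap.id)) ≤ 1 := by
  obtain ⟨ρ, hρ⟩ : ∃ ρ, invariantStates Φ ⊆ {ρ} := by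
    rcases hunique.eq_empty_or_singleton with h | ⟨ρ, h⟩
    · exact ⟨0, by simp [h]⟩
    · exact ⟨ρ, h.subset⟩
  have hker : LinearMap.ker (Φ.toLinearMap - LinearMap.id) ≤ Submodule.span ℂ {ρ} :=
    fun σ hσ => mem_span_of_map_eq_self hΦ hρ (by simpa [sub_eq_zero] using hσ)
  exact (Submodule.finrank_mono hker).trans (by simpa using finrank_span_le_card (R := ℂ) {ρ})

theorem range_sub_id_eq_ker_trace [Nonempty n] (hΦ : ∀ σ, (Φ σ).trace = σ.trace)
    (hunique : (invariantStates Φ).Subsingleton) :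
    LinearMap.range (Φ.toLinearMap - LinearMap.id) = LinearMap.ker (traceLinearMap n ℂ ℂ) := by
  classical
  have htrace : traceLinearMap n ℂ ℂ ≠ 0 := fun h => by
    simpa using LinearMap.congr_fun h 1
  refine Submodule.eq_of_le_of_finrank_le ?_ ?_
  · rintro _ ⟨σ, rfl⟩
    simp [hΦ]
  · have hker := finrank_ker_sub_id_le_one hΦ hunique
    have hrange := LinearMap.finrank_range_add_finrank_ker (Φ.toLinearMap - LinearMap.id)
    have hcodim := Module.Dual.finrank_ker_add_one_of_ne_zero htrace
    omega

theorem exists_eq_smul_one_of_trace_mul_map_eq [DecidableEq n]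
    (hΦ : ∀ σ, (Φ σ).trace = σ.trace) (hunique : (invariantStates Φ).Subsingleton)
    {Y : Matrix n n ℂ} (hY : ∀ σ, (Y * Φ σ).trace = (Y * σ).trace) :
    ∃ c : ℂ, Y = c • (1 : Matrix n n ℂ) := by
  cases isEmpty_or_nonempty n
  · exact ⟨0, Subsingleton.elim _ _⟩
  refine exists_eq_smul_one_of_trace_mul_eq_zero fun Z hZ => ?_
  obtain ⟨σ, rfl⟩ : Z ∈ LinearMap.range (Φ.toLinearMap - LinearMap.id) := by
    rw [range_sub_id_eq_ker_trace hΦ hunique]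
    exact hZ
  simp [Matrix.mul_sub, hY]

end Complex

section Kraus

variable {𝕜 ι n : Type*} [RCLike 𝕜] [Fintype ι] [Fintype n]

/-- The completely positive map `σ ↦ ∑ j, A j * σ * (A j)ᴴ` with Kraus operators `A j`, the
paper's `L`, bundled as a positive linear map. -/
def krausMap (A : ι → Matrix n n 𝕜) : Matrix n n 𝕜 →ₚ[𝕜] Matrix n n 𝕜 :=
  .mk₀ (∑ j, LinearMap.mulLeftRight 𝕜 (A j, (A j)ᴴ)) fun σ hσ => by
    simpa using Finset.sum_nonneg fun j _ => (hσ.posSemidef.mul_mul_conjTranspose_same (A j)).nonneg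

theorem krausMap_apply (A : ι → Matrix n n 𝕜) (σ : Matrix n n 𝕜) :
    krausMap A σ = ∑ j, A j * σ * (A j)ᴴ := by
  change (∑ j, LinearMap.mulLeftRight 𝕜 (A j, (A j)ᴴ)) σ = _
  simp

theorem trace_mul_krausMap (A : ι → Matrix n n 𝕜) (Y σ : Matrix n n 𝕜) :
    (Y * krausMap A σ).trace = ((∑ j, (A j)ᴴ * Y * A j) * σ).trace := by
  rw [krausMap_apply, Matrix.mul_sum, Matrix.sum_mul, trace_sum, trace_sum]
  refine Finset.sum_congr rfl fun j _ => ?_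
  rw [← Matrix.mul_assoc, trace_mul_comm]
  simp only [Matrix.mul_assoc]

theorem trace_krausMap [DecidableEq n] {A : ι → Matrix n n 𝕜} (hA : ∑ j, (A j)ᴴ * A j = 1)
    (σ : Matrix n n 𝕜) : (krausMap A σ).trace = σ.trace := by
  simpa [hA] using trace_mul_krausMap A 1 σ

end Kraus

theorem stmt5_general {ι n : Type*} [Fintype ι] [Fintype n] [DecidableEq n]
    (A : ι → Matrix n n ℂ) (hA : ∑ j, (A j)ᴴ * A j = 1)
    (hunique : (invariantStates (krausMap A)).Subsingleton) {B X₁ X₂ : Matrix n n ℂ}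
    (hX₁ : X₁ - ∑ j, (A j)ᴴ * X₁ * A j = B) (hX₂ : X₂ - ∑ j, (A j)ᴴ * X₂ * A j = B) :
    ∃ c : ℂ, X₁ - X₂ = c • (1 : Matrix n n ℂ) := by
  have hfix : ∑ j, (A j)ᴴ * (X₁ - X₂) * A j = X₁ - X₂ := by
    simp only [Matrix.mul_sub, Matrix.sub_mul, Finset.sum_sub_distrib]
    rw [← sub_eq_zero, sub_sub_sub_comm, ← neg_sub X₁, ← neg_sub X₂, hX₁, hX₂, sub_self]
  refine exists_eq_smul_one_of_trace_mul_map_eq (trace_krausMap hA) hunique fun σ => ?_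
  rw [trace_mul_krausMap, hfix]

/-- Under (H1), any two solutions of the equation
`X - L^*(X) = Σ_i (e_i·l) A_i^* A_i - (m·l) I` differ by a complex multiple of the
identity. -/
theorem stmt5 {k d : ℕ} (hd : 1 ≤ d)
    (A : Fin (2 * d) → Matrix (Fin k) (Fin k) ℂ)
    (hA : ∑ j, (A j)ᴴ * A j = 1)
    (ρinf : Matrix (Fin k) (Fin k) ℂ) (hρinf : IsDensity ρinf)
    (hinv : (∑ j, A j * ρinf * (A j)ᴴ) = ρinf)
    (huniq : ∀ σ, IsDensity σ → (∑ j, A j * σ * (A j)ᴴ) = σ → σ = ρinf)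
    (l : Fin d → ℝ) (L₁ L₂ : Matrix (Fin k) (Fin k) ℂ)
    (hL₁ : L₁ - (∑ i, (A i)ᴴ * L₁ * A i) =
      (∑ i, (∑ j, dirR d i j * l j) • ((A i)ᴴ * A i)) -
        (∑ j, mvec A ρinf j * l j) • (1 : Matrix (Fin k) (Fin k) ℂ))
    (hL₂ : L₂ - (∑ i, (A i)ᴴ * L₂ * A i) =
      (∑ i, (∑ j, dirR d i j * l j) • ((A i)ᴴ * A i)) -
        (∑ j, mvec A ρinf j * l j) • (1 : Matrix (Fin k) (Fin k) ℂ)) :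
    ∃ c : ℂ, L₁ - L₂ = c • (1 : Matrix (Fin k) (Fin k) ℂ) := by
  refine stmt5_general A hA ?_ hL₁ hL₂
  rintro σ ⟨hσ, hσtrace, hσfix⟩ τ ⟨hτ, hτtrace, hτfix⟩
  rw [krausMap_apply] at hσfix hτfix
  rw [huniq σ ⟨hσ, hσtrace⟩ hσfix, huniq τ ⟨hτ, hτtrace⟩ hτfix]
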